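/- For every judgement Γ ⊢ x : A derivable in CaTT in which no term constructor appears (so x is a variable and Γ, A are GSeTT expressions), the closed λ-term ⟦Γ ⊢ x : A⟧, defined as the λ-lifting of ⟦Γ⟧_B ⊢ x : ⟦A⟧_B, is a valid term of HoTT: the judgement ⊢ ⟦Γ ⊢ x : A⟧ : ⟦Γ ⊢ A⟧ is derivable in HoTT, where ⟦Γ ⊢ A⟧ is the Π-lifting of ⟦Γ⟧_B ⊢ ⟦A⟧_B (Proposition 4.2). -/

import Mathlib

/-! ### Deep embedding of the fragment of Martin-Löf type theory ("HoTT") -/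

/-- HoTT variable names: `Sum.inl n` is the image of CaTT/GSeTT variable `n`,
`Sum.inr k` are extra HoTT-only names. -/
abbrev HVar : Type := ℕ ⊕ ℕ

/-- The fixed variable `B`, not the name of any CaTT/GSeTT variable. -/
def Bv : HVar := Sum.inr 0

mutual
/-- Pre-terms of HoTT. `J A u x y e P p` is the Paulin-Mohring eliminator with
base point `u : A`, motive `P` (with bound variables `x y e`) and base case `p`. -/
inductive HTm : Type
  | var : HVar → HTm
  | refl : HTy → HTm → HTm
  | J : HTy → HTm → HVar → HVar → HVar → HTy → HTm → HTm
  | app : HTm → HTm → HTm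
  | lam : HVar → HTy → HTm → HTm

/-- Pre-types of HoTT: the Tarski universe `univ`, `el`, identity types and Π-types. -/
inductive HTy : Type
  | univ : HTy
  | el : HTm → HTy
  | id : HTy → HTm → HTm → HTy
  | pi : HVar → HTy → HTy → HTy
end

/-- Pre-substitutions of HoTT (head = most recent binding). -/
abbrev HSubst := List (HVar × HTm)
/-- Pre-contexts of HoTT (head = most recent declaration). -/
abbrev HCtx := List (HVar × HTy)

def hlookup : HSubst → HVar → HTm
  | [], x => .var x
  | (y, t) :: γ, x => if y = x then t else hlookup γ x

/-- Remove the bindings of a bound variable from a substitution. -/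
def hdrop (γ : HSubst) (x : HVar) : HSubst := γ.filter (fun q => q.1 ≠ x)

mutual
/-- Action of substitutions on HoTT pre-terms. -/
def hsubTm : HTm → HSubst → HTm
  | .var x, γ => hlookup γ x
  | .refl A u, γ => .refl (hsubTy A γ) (hsubTm u γ)
  | .J A u x y e P p, γ =>
      .J (hsubTy A γ) (hsubTm u γ) x y e
        (hsubTy P (hdrop (hdrop (hdrop γ x) y) e)) (hsubTm p γ)
  | .app f u, γ => .app (hsubTm f γ) (hsubTm u γ)
  | .lam x A u, γ => .lam x (hsubTy A γ) (hsubTm u (hdrop γ x))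
/-- Action of substitutions on HoTT pre-types. -/
def hsubTy : HTy → HSubst → HTy
  | .univ, _ => .univ
  | .el a, γ => .el (hsubTm a γ)
  | .id A u v, γ => .id (hsubTy A γ) (hsubTm u γ) (hsubTm v γ)
  | .pi x A B, γ => .pi x (hsubTy A γ) (hsubTy B (hdrop γ x))
end

/-- Composition of HoTT substitutions. -/
def hcomp (δ γ : HSubst) : HSubst := δ.map (fun p => (p.1, hsubTm p.2 γ))

/-- The identity substitution of a context. -/
def hid (Γ : HCtx) : HSubst := Γ.map (fun p => (p.1, HTm.var p.1))

def hassoc : HCtx → HVar → Option HTy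
  | [], _ => none
  | (y, A) :: Γ, x => if y = x then some A else hassoc Γ x

mutual
/-- Definitional equality of HoTT pre-terms, generated by the computation rule
`J(A,u,P,p) v refl ≡ p` together with congruence rules. -/
inductive HTmEq : HTm → HTm → Prop
  | jbeta (A : HTy) (u : HTm) (x y e : HVar) (P : HTy) (p v : HTm) (B : HTy) (w : HTm) :
      HTmEq (.app (.app (.J A u x y e P p) v) (.refl B w)) p
  | refl (u : HTm) : HTmEq u u
  | symm : HTmEq u v → HTmEq v u
  | trans : HTmEq u v → HTmEq v w → HTmEq u w
  | reflCong : HTyEq A A' → HTmEq u u' → HTmEq (.refl A u) (.refl A' u')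
  | JCong : HTyEq A A' → HTmEq u u' → HTyEq P P' → HTmEq p p' →
      HTmEq (.J A u x y e P p) (.J A' u' x y e P' p')
  | appCong : HTmEq f f' → HTmEq u u' → HTmEq (.app f u) (.app f' u')
  | lamCong : HTyEq A A' → HTmEq u u' → HTmEq (.lam x A u) (.lam x A' u')

/-- Definitional equality of HoTT pre-types. -/
inductive HTyEq : HTy → HTy → Prop
  | refl (A : HTy) : HTyEq A A
  | symm : HTyEq A B → HTyEq B A
  | trans : HTyEq A B → HTyEq B C → HTyEq A C
  | elCong : HTmEq a a' → HTyEq (.el a) (.el a')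
  | idCong : HTyEq A A' → HTmEq u u' → HTmEq v v' → HTyEq (.id A u v) (.id A' u' v')
  | piCong : HTyEq A A' → HTyEq B B' → HTyEq (.pi x A B) (.pi x A' B')
end

mutual
/-- Validity of HoTT contexts: `⊢ Γ`. -/
inductive HCtxJ : HCtx → Prop
  | nil : HCtxJ []
  | cons : HCtxJ Γ → HTyJ Γ A → HCtxJ ((x, A) :: Γ)

/-- Validity of HoTT types: `Γ ⊢ A`. -/
inductive HTyJ : HCtx → HTy → Prop
  | univ : HCtxJ Γ → HTyJ Γ .univ
  | el : HTmJ Γ a .univ → HTyJ Γ (.el a)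
  | id : HTmJ Γ u A → HTmJ Γ v A → HTyJ Γ (.id A u v)
  | pi : HTyJ Γ A → HTyJ ((x, A) :: Γ) B → HTyJ Γ (.pi x A B)
  | conv : HTyJ Γ A → HTyEq A B → HTyJ Γ B

/-- Typing of HoTT terms: `Γ ⊢ u : A`. -/
inductive HTmJ : HCtx → HTm → HTy → Prop
  | var : HCtxJ Γ → hassoc Γ x = some A → HTmJ Γ (.var x) A
  | refl : HTmJ Γ u A → HTmJ Γ (.refl A u) (.id A u u)
  | lam : HTyJ Γ A → HTmJ ((x, A) :: Γ) u B → HTmJ Γ (.lam x A u) (.pi x A B)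
  | app : HTmJ Γ f (.pi x A B) → HTmJ Γ u A → HTmJ Γ (.app f u) (hsubTy B [(x, u)])
  | J : HTyJ Γ A → HTmJ Γ u A →
      HTyJ ((e, .id A (.var x) (.var y)) :: (y, A) :: (x, A) :: Γ) P →
      HTmJ Γ p (hsubTy P [(x, u), (y, u), (e, .refl A u)]) →
      HTmJ Γ (.J A u x y e P p)
        (.pi y A (.pi e (.id A u (.var y)) (hsubTy P [(x, u)])))
  | conv : HTmJ Γ u A → HTyEq A B → HTmJ Γ u B
  | convTm : HTmJ Γ u A → HTmEq u v → HTmJ Γ v A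

/-- Typing of HoTT substitutions: `Δ ⊢ γ : Γ`. -/
inductive HSubJ : HCtx → HSubst → HCtx → Prop
  | nil : HCtxJ Δ → HSubJ Δ [] []
  | cons : HSubJ Δ γ Γ → HTyJ Γ A → HTmJ Δ t (hsubTy A γ) →
      HSubJ Δ ((x, t) :: γ) ((x, A) :: Γ)
end

mutual
/-- Iterated identity types `Idⁿ_A(u)`. -/
def idN : ℕ → HTy → HTm → HTy
  | 0, A, _ => A
  | n+1, A, u => .id (idN n A u) (reflN n A u) (reflN n A u)
/-- Iterated reflexivities `reflⁿ_{A,u}`. -/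
def reflN : ℕ → HTy → HTm → HTm
  | 0, _, u => u
  | n+1, A, u => .refl (idN n A u) (reflN n A u)
end

/-- Π-lifting `Π_Γ.A`: successively bind all variables of `Γ`. -/
def piLift : HCtx → HTy → HTy
  | [], A => A
  | (x, T) :: Γ, A => piLift Γ (.pi x T A)

/-- λ-lifting `λ_Γ.u`: successively bind all variables of `Γ`. -/
def lamLift : HCtx → HTm → HTm
  | [], u => u
  | (x, T) :: Γ, u => lamLift Γ (.lam x T u)

/-! ### The dependent type theory CaTT -/

mutual
/-- Pre-terms of CaTT: variables and coherences `coh_{Γ,A}[γ]`. -/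
inductive CTm : Type
  | var : ℕ → CTm
  | coh : CCtx → CTy → CSub → CTm
/-- Pre-types of CaTT: `⋆` and `u →_A v`. -/
inductive CTy : Type
  | obj : CTy
  | arr : CTy → CTm → CTm → CTy
/-- Pre-substitutions of CaTT. -/
inductive CSub : Type
  | nil : CSub
  | cons : CSub → ℕ → CTm → CSub
/-- Pre-contexts of CaTT. -/
inductive CCtx : Type
  | nil : CCtx
  | cons : CCtx → ℕ → CTy → CCtx
end

def clookup : CSub → ℕ → CTm
  | .nil, x => .var x
  | .cons γ y t, x => if y = x then t else clookup γ x

mutual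
/-- Action of CaTT substitutions on pre-terms; `coh_{Γ,A}[γ][δ] = coh_{Γ,A}[γ∘δ]`. -/
def csubTm : CTm → CSub → CTm
  | .var x, γ => clookup γ x
  | .coh Γ A δ, γ => .coh Γ A (ccomp δ γ)
/-- Action of CaTT substitutions on pre-types. -/
def csubTy : CTy → CSub → CTy
  | .obj, _ => .obj
  | .arr A u v, γ => .arr (csubTy A γ) (csubTm u γ) (csubTm v γ)
/-- Composition of CaTT substitutions. -/
def ccomp : CSub → CSub → CSub
  | .nil, _ => .nil
  | .cons δ x t, γ => .cons (ccomp δ γ) x (csubTm t γ)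
end

def cassoc : CCtx → ℕ → Option CTy
  | .nil, _ => none
  | .cons Γ y A, x => if y = x then some A else cassoc Γ x

/-- The set of variables declared in a CaTT context. -/
def cvarsCtx : CCtx → Finset ℕ
  | .nil => ∅
  | .cons Γ x _ => insert x (cvarsCtx Γ)

mutual
/-- Variables used by a CaTT pre-term. -/
def varTm : CTm → Finset ℕ
  | .var x => {x}
  | .coh _ _ γ => varSub γ
/-- Variables used by a CaTT pre-type. -/
def varTy : CTy → Finset ℕ
  | .obj => ∅
  | .arr A u v => varTy A ∪ varTm u ∪ varTm v
/-- Variables used by a CaTT pre-substitution. -/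
def varSub : CSub → Finset ℕ
  | .nil => ∅
  | .cons γ _ t => varSub γ ∪ varTm t
end

/-- Dimension of a CaTT type: `dim ⋆ = -1`, `dim (u →_A v) = dim A + 1`. -/
def cdim : CTy → ℤ
  | .obj => -1
  | .arr A _ _ => cdim A + 1

/-- `dim A + 1`, as a natural number. -/
def cdimN : CTy → ℕ
  | .obj => 0
  | .arr A _ _ => cdimN A + 1

/-- Dimension of a CaTT context. -/
def cdimCtx : CCtx → ℤ
  | .nil => -1
  | .cons Γ _ A => max (cdimCtx Γ) (cdim A)

/-- The auxiliary ps-context judgement `Γ ⊢_ps x : A` for CaTT contexts. -/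
inductive CPsAux : CCtx → ℕ → CTy → Prop
  | pss (x : ℕ) : CPsAux (.cons .nil x .obj) x .obj
  | pse : CPsAux Γ x A → y ∉ cvarsCtx Γ → f ∉ cvarsCtx Γ → f ≠ y →
      CPsAux (.cons (.cons Γ y A) f (.arr A (.var x) (.var y))) f (.arr A (.var x) (.var y))
  | psd : CPsAux Γ f (.arr A (.var x) (.var y)) → CPsAux Γ y A

/-- The ps-context judgement `Γ ⊢_ps` for CaTT contexts. -/
inductive CPs : CCtx → Prop
  | ps : CPsAux Γ x .obj → CPs Γ

def ctail : CCtx → CCtx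
  | .nil => .nil
  | .cons Γ _ _ => Γ

/-- The `i`-source `∂ᵢ⁻Γ` of a ps-context. -/
def csrc (i : ℤ) : CCtx → CCtx
  | .cons (.cons Δ y A) f F =>
      if cdim A + 1 ≥ i then csrc i Δ else .cons (.cons (csrc i Δ) y A) f F
  | Γ => Γ

/-- The `i`-target `∂ᵢ⁺Γ` of a ps-context. -/
def ctgt (i : ℤ) : CCtx → CCtx
  | .cons (.cons Δ y A) f F =>
      if cdim A + 1 > i then ctgt i Δ
      else if cdim A + 1 = i then .cons (ctail (ctgt i Δ)) y A
      else .cons (.cons (ctgt i Δ) y A) f F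
  | Γ => Γ

mutual
/-- `⊢ Γ` in CaTT. -/
inductive CCtxJ : CCtx → Prop
  | nil : CCtxJ .nil
  | cons : CCtxJ Γ → CTyJ Γ A → CCtxJ (.cons Γ x A)
/-- `Γ ⊢ A` in CaTT. -/
inductive CTyJ : CCtx → CTy → Prop
  | obj : CCtxJ Γ → CTyJ Γ .obj
  | arr : CTmJ Γ u A → CTmJ Γ v A → CTyJ Γ (.arr A u v)
/-- `Γ ⊢ t : A` in CaTT. -/
inductive CTmJ : CCtx → CTm → CTy → Prop
  | var : CCtxJ Γ → cassoc Γ x = some A → CTmJ Γ (.var x) A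
  | coh : CohJ Γ A → CSubJ Δ γ Γ → CTmJ Δ (.coh Γ A γ) (csubTy A γ)
/-- `Δ ⊢ γ : Γ` in CaTT. -/
inductive CSubJ : CCtx → CSub → CCtx → Prop
  | nil : CCtxJ Δ → CSubJ Δ .nil .nil
  | cons : CSubJ Δ γ Γ → CTyJ Γ A → CTmJ Δ t (csubTy A γ) →
      CSubJ Δ (.cons γ x t) (.cons Γ x A)
/-- The coherence judgement `Γ ⊢ coh A` of CaTT. -/
inductive CohJ : CCtx → CTy → Prop
  | mk (i : ℤ) : CPs Γ → (i = cdimCtx Γ - 1 ∨ i = cdimCtx Γ) →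
      CTmJ (csrc i Γ) u A → CTmJ (ctgt i Γ) v A →
      varTm u ∪ varTy A = cvarsCtx (csrc i Γ) →
      varTm v ∪ varTy A = cvarsCtx (ctgt i Γ) →
      CohJ Γ (.arr A u v)
end

/-- Predicate: a CaTT pre-term contains no `coh` constructor. -/
def nocohTm : CTm → Prop
  | .var _ => True
  | .coh _ _ _ => False

/-- Predicate: a CaTT pre-type contains no `coh` constructor. -/
def nocohTy : CTy → Prop
  | .obj => True
  | .arr A u v => nocohTy A ∧ nocohTm u ∧ nocohTm v

/-- Predicate: a CaTT pre-context contains no `coh` constructor. -/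
def nocohCtx : CCtx → Prop
  | .nil => True
  | .cons Γ _ A => nocohCtx Γ ∧ nocohTy A

/-! ### Translation of CaTT into HoTT -/

mutual
def szTm : CTm → ℕ
  | .var _ => 1
  | .coh Γ A γ => szCtx Γ + szTy A + szSub γ + 1
def szTy : CTy → ℕ
  | .obj => 1
  | .arr A u v => szTy A + szTm u + szTm v + 1
def szSub : CSub → ℕ
  | .nil => 1
  | .cons γ _ t => szSub γ + szTm t + 1
def szCtx : CCtx → ℕ
  | .nil => 1
  | .cons Γ _ A => szCtx Γ + szTy A + 1
end

lemma szSub_pos (γ : CSub) : 0 < szSub γ := by cases γ <;> simp [szSub]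
lemma szCtx_pos (Γ : CCtx) : 0 < szCtx Γ := by cases Γ <;> simp [szCtx]
lemma szTy_pos (A : CTy) : 0 < szTy A := by cases A <;> simp [szTy]

/-- The fresh HoTT variables `x'`, `y'`, `f'` used in the motives of `J`. -/
def xV : HVar := Sum.inr 1
def yV : HVar := Sum.inr 2
def fV : HVar := Sum.inr 3

mutual
/-- Translation `⟦-⟧_B` of CaTT pre-terms into HoTT pre-terms. -/
def interpTm : CTm → HTm
  | .var x => .var (Sum.inl x)
  | .coh Γ A γ => hsubTm (elim Γ A Γ (hid (interpCtx Γ))) (interpSub γ)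
termination_by t => szTm t
decreasing_by
  all_goals simp [szTm, szTy, szSub, szCtx]
  all_goals (have _h1 := szSub_pos γ; omega)
/-- Translation `⟦-⟧_B` of CaTT pre-types into HoTT pre-types. -/
def interpTy : CTy → HTy
  | .obj => .el (.var Bv)
  | .arr A u v => .id (interpTy A) (interpTm u) (interpTm v)
termination_by A => szTy A
decreasing_by
  all_goals simp [szTm, szTy, szSub, szCtx]
  all_goals omega
/-- Translation `⟦-⟧_B` of CaTT pre-substitutions (`⟦⟨⟩⟧_B = ⟨B ↦ B⟩`). -/
def interpSub : CSub → HSubst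
  | .nil => [(Bv, .var Bv)]
  | .cons γ x t => (Sum.inl x, interpTm t) :: interpSub γ
termination_by γ => szSub γ
decreasing_by
  all_goals simp [szTm, szTy, szSub, szCtx]
  all_goals omega
/-- Translation `⟦-⟧_B` of CaTT pre-contexts (`⟦∅⟧_B = (B : Type)`). -/
def interpCtx : CCtx → HCtx
  | .nil => [(Bv, .univ)]
  | .cons Γ x A => (Sum.inl x, interpTy A) :: interpCtx Γ
termination_by Γ => szCtx Γ
decreasing_by
  all_goals simp [szTm, szTy, szSub, szCtx]
  all_goals omega
/-- The auxiliary operation `elim_B(Δ, A, Γ, γ)`, defined by induction on the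
ps-context `Δ`, which interprets coherences via iterated applications of `J`. -/
def elim : CCtx → CTy → CCtx → HSubst → HTm
  | .cons .nil x .obj, A, _, _ =>
      reflN (cdimN A) (.el (.var Bv)) (.var (Sum.inl x))
  | .cons (.cons Δ y C) f (.arr C' (.var x) v'), A, Γ, γ =>
      let iC := interpTy C
      let iΔ' := interpCtx (.cons (.cons Δ y C) f (.arr C' (.var x) v'))
      let P := hsubTy (hsubTy (interpTy A) γ)
          ((Sum.inl x, .var xV) :: (Sum.inl y, .var yV) :: (Sum.inl f, .var fV) :: hid iΔ')
      let p := elim Δ A Γ (hcomp γ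
          ((Sum.inl y, .var (Sum.inl x)) ::
           (Sum.inl f, .refl iC (.var (Sum.inl x))) :: hid (interpCtx Δ)))
      .app (.app (.J iC (.var (Sum.inl x)) xV yV fV P p) (.var (Sum.inl y))) (.var (Sum.inl f))
  | _, _, _, _ => .var Bv
termination_by Δ A _ _ => szTy A + szCtx Δ
decreasing_by
  all_goals simp [szTm, szTy, szSub, szCtx]
  all_goals first
    | omega
    | (have _h2 := szCtx_pos Δ; omega)
    | (have _h3 := szTy_pos A; omega)
end

/-- The translation `⟦coh_{Γ,A}⟧_B = elim_B(Γ, A, Γ, id_{⟦Γ⟧_B})` of a coherence. -/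
def interpCoh (Γ : CCtx) (A : CTy) : HTm := elim Γ A Γ (hid (interpCtx Γ))

mutual
/-- Free variables of an HoTT pre-term. -/
def hfvTm : HTm → Finset HVar
  | .var x => {x}
  | .refl A u => hfvTy A ∪ hfvTm u
  | .J A u x y e P p => hfvTy A ∪ hfvTm u ∪ (hfvTy P \ {x, y, e}) ∪ hfvTm p
  | .app f u => hfvTm f ∪ hfvTm u
  | .lam x A u => hfvTy A ∪ (hfvTm u \ {x})
/-- Free variables of an HoTT pre-type. -/
def hfvTy : HTy → Finset HVar
  | .univ => ∅
  | .el a => hfvTm a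
  | .id A u v => hfvTy A ∪ hfvTm u ∪ hfvTm v
  | .pi x A B => hfvTy A ∪ (hfvTy B \ {x})
end

/-- The variables bound by an HoTT context. -/
def hctxVars (Γ : HCtx) : Finset HVar := (Γ.map Prod.fst).toFinset

/-!
On expressions without coherences, the translation sends each rule of GSeTT to a rule of HoTT, so
derivability is preserved by mutual induction on derivations. The binder types needed to abstract
over the resulting context come from the presupposition that a context in which a term is typed is
valid.
-/

theorem hassoc_interpCtx_Bv : ∀ Γ : CCtx, hassoc (interpCtx Γ) Bv = some .univ
  | .nil => by simp [interpCtx, hassoc]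
  | .cons Γ y C => by simpa [interpCtx, hassoc, Bv] using hassoc_interpCtx_Bv Γ

theorem hassoc_interpCtx_inl (x : ℕ) :
    ∀ Γ : CCtx, hassoc (interpCtx Γ) (.inl x) = (cassoc Γ x).map interpTy
  | .nil => by simp [interpCtx, hassoc, cassoc, Bv]
  | .cons Γ y C => by
    by_cases hyx : y = x
    · simp [interpCtx, hassoc, cassoc, hyx]
    · simpa [interpCtx, hassoc, cassoc, hyx] using hassoc_interpCtx_inl x Γ

mutual

theorem CCtxJ.hCtxJ_interpCtx {Γ : CCtx} (h : CCtxJ Γ) (hΓ : nocohCtx Γ) :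
    HCtxJ (interpCtx Γ) := by
  match h with
  | .nil =>
    rw [interpCtx]
    exact .cons .nil (.univ .nil)
  | .cons hctx hC =>
    rw [interpCtx]
    exact .cons (hctx.hCtxJ_interpCtx hΓ.1) (hC.hTyJ_interpTy hΓ.1 hΓ.2)

theorem CTyJ.hTyJ_interpTy {Γ : CCtx} {A : CTy} (h : CTyJ Γ A) (hΓ : nocohCtx Γ)
    (hA : nocohTy A) : HTyJ (interpCtx Γ) (interpTy A) := by
  match h with
  | .obj hctx =>
    rw [interpTy]
    exact .el (.var (hctx.hCtxJ_interpCtx hΓ) (hassoc_interpCtx_Bv Γ))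
  | .arr hu hv =>
    rw [interpTy]
    exact .id (hu.hTmJ_interpTm hΓ hA.2.1) (hv.hTmJ_interpTm hΓ hA.2.2)

theorem CTmJ.hTmJ_interpTm {Γ : CCtx} {t : CTm} {A : CTy} (h : CTmJ Γ t A) (hΓ : nocohCtx Γ)
    (ht : nocohTm t) : HTmJ (interpCtx Γ) (interpTm t) (interpTy A) := by
  match h with
  | .var (x := x) hctx hx =>
    rw [interpTm]
    refine .var (hctx.hCtxJ_interpCtx hΓ) ?_
    rw [hassoc_interpCtx_inl, hx, Option.map_some]
  | .coh _ _ => exact ht.elim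

end

mutual

theorem HTyJ.hCtxJ {Γ : HCtx} {A : HTy} : HTyJ Γ A → HCtxJ Γ
  | .univ hΓ => hΓ
  | .el ha => ha.hCtxJ
  | .id hu _ => hu.hCtxJ
  | .pi hA _ => hA.hCtxJ
  | .conv hA _ => hA.hCtxJ

theorem HTmJ.hCtxJ {Γ : HCtx} {u : HTm} {A : HTy} : HTmJ Γ u A → HCtxJ Γ
  | .var hΓ _ => hΓ
  | .refl hu => hu.hCtxJ
  | .lam hA _ => hA.hCtxJ
  | .app hf _ => hf.hCtxJ
  | .J hA _ _ _ => hA.hCtxJ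
  | .conv hu _ => hu.hCtxJ
  | .convTm hu _ => hu.hCtxJ

end

theorem HTmJ.lamLift {Γ Δ : HCtx} {u : HTm} {A : HTy} (h : HTmJ (Δ ++ Γ) u A) :
    HTmJ Γ (lamLift Δ u) (piLift Δ A) := by
  induction Δ generalizing u A with
  | nil => exact h
  | cons p Δ ih =>
    obtain ⟨x, T⟩ := p
    have hT : HTyJ (Δ ++ Γ) T := by cases h.hCtxJ with | cons _ hT => exact hT
    exact ih (.lam hT h)

/-- Proposition 4.2. -/
theorem stmt10 (Γ : CCtx) (x : ℕ) (A : CTy) (h : CTmJ Γ (.var x) A)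
    (hΓ : nocohCtx Γ) (hA : nocohTy A) :
    HTmJ [] (lamLift (interpCtx Γ) (interpTm (.var x)))
      (piLift (interpCtx Γ) (interpTy A)) := by
  have hx : HTmJ (interpCtx Γ ++ []) (interpTm (.var x)) (interpTy A) := by
    simpa only [List.append_nil] using h.hTmJ_interpTm hΓ trivial
  exact hx.lamLift
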